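/- arXiv:2112.11000 — 2 statements merged into one kernel-verified Lean document; each statement's English description precedes it below -/
import Mathlib

section
/- Let ε > 0 and let (ς₁, ς₂) be an ε-iso-iso of [0,∞). Let H be a complex Hilbert space and let U : ℝ → (H →L[ℂ] H) be a family of operators such that ‖U(t)ζ‖ = ‖ζ‖ for all t ∈ ℝ and ζ ∈ H. Let ξ, η ∈ H satisfy ‖ξ‖ + ‖η‖ ≤ 1, and suppose that for every t ∈ ℝ the map s ↦ U(s)ξ is differentiable at t with derivative U(t)η. Then for each j ∈ {1,2} and every t ∈ [0, 1/ε], ‖U(ς_j(t))ξ − U(t)ξ‖ ≤ ε. -/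
/-!
Taking `x = y = 0` in the iso-iso inequality gives `| |z| - |ς_j z| | < ε`, that is
`|ς_j z - z| < ε` because both numbers are nonnegative. The orbit `s ↦ U s ξ` has derivative
`U s η` of norm `‖η‖ ≤ 1`, so it is `1`-Lipschitz by the mean value inequality.
-/

/-- Let `(ς₁, ς₂)` be an `ε`-iso-iso of `[0,∞)`, let `U : ℝ → B(H)` be a
family of norm-preserving operators on a complex Hilbert space `H`, and let `ξ, η ∈ H` with
`‖ξ‖ + ‖η‖ ≤ 1` be such that `s ↦ U(s)ξ` is differentiable with derivative `U(t)η` at every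
`t`. Then `‖U(ς_j(t))ξ − U(t)ξ‖ ≤ ε` for each `j ∈ {1,2}` and every `t ∈ [0, 1/ε]`. -/
theorem unitary_orbit_iso_iso_estimate (ε : ℝ) (hε : 0 < ε) (ς₁ ς₂ : ℝ → ℝ)
    (hς₁pos : ∀ t : ℝ, 0 ≤ t → 0 ≤ ς₁ t) (hς₂pos : ∀ t : ℝ, 0 ≤ t → 0 ≤ ς₂ t)
    (hς₁0 : ς₁ 0 = 0) (hς₂0 : ς₂ 0 = 0)
    (hiso : ∀ x ∈ Set.Icc (0 : ℝ) (1 / ε), ∀ y ∈ Set.Icc (0 : ℝ) (1 / ε),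
      ∀ z ∈ Set.Icc (0 : ℝ) (1 / ε),
        abs (|ς₁ x + ς₁ y - z| - |x + y - ς₂ z|) < ε ∧
        abs (|ς₂ x + ς₂ y - z| - |x + y - ς₁ z|) < ε)
    {H : Type*} [NormedAddCommGroup H] [InnerProductSpace ℂ H] [CompleteSpace H]
    (U : ℝ → H →L[ℂ] H) (hU : ∀ (t : ℝ) (ζ : H), ‖U t ζ‖ = ‖ζ‖)
    (ξ η : H) (hξη : ‖ξ‖ + ‖η‖ ≤ 1)
    (hderiv : ∀ t : ℝ, HasDerivAt (fun s : ℝ => U s ξ) (U t η) t) :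
    ∀ t ∈ Set.Icc (0 : ℝ) (1 / ε),
      ‖U (ς₁ t) ξ - U t ξ‖ ≤ ε ∧ ‖U (ς₂ t) ξ - U t ξ‖ ≤ ε := by
  have h0 : (0 : ℝ) ∈ Set.Icc (0 : ℝ) (1 / ε) := ⟨le_rfl, by positivity⟩
  have hlip : ∀ a b : ℝ, ‖U a ξ - U b ξ‖ ≤ |a - b| := by
    intro a b
    have h := Convex.norm_image_sub_le_of_norm_hasDerivWithin_le (C := 1)
      (fun s _ => (hderiv s).hasDerivWithinAt)
      (fun s _ => by rw [hU]; linarith [norm_nonneg ξ])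
      convex_univ (Set.mem_univ b) (Set.mem_univ a)
    simpa [Real.norm_eq_abs] using h
  intro t ht
  obtain ⟨h₂, h₁⟩ := hiso 0 h0 0 h0 t ht
  simp only [hς₁0, hς₂0, add_zero, zero_sub, abs_neg, abs_of_nonneg ht.1,
    abs_of_nonneg (hς₁pos t ht.1), abs_of_nonneg (hς₂pos t ht.1)] at h₁ h₂
  rw [abs_sub_comm] at h₁ h₂
  exact ⟨(hlip _ _).trans h₁.le, (hlip _ _).trans h₂.le⟩
end

section
/- For n ∈ ℕ let S_n ⊆ ℝ be nonempty and let S_∞ ⊆ ℝ, and suppose (S_n) Kuratowski-converges to S_∞. Suppose S_∞ ∩ [0,∞) has a least element a with a > 0, and that for each n ∈ ℕ the set S_n ∩ [0,∞) has a least element a_n. Suppose there exists δ > 0 such that for all n ∈ ℕ, every s ∈ S_n with s ≠ a_n satisfies s < 0 or s ≥ a_n + δ. Then lim_{n→∞} a_n = a. -/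
/-!
Elements `x n ∈ S n` converging to `a > 0` are eventually nonnegative, so `aseq n ≤ x n`
eventually, which bounds `aseq` above by anything larger than `a`. Conversely, if
`aseq n ≤ b < a` for infinitely many `n`, compactness of `[0, b]` gives a limit point of
`aseq` in `[0, b]`, which lies in `Sinf` and contradicts the minimality of `a`.
-/

open Filter

/-- base case of Corollary 5.4 of the paper.  Suppose the nonempty sets
`S n ⊆ ℝ` Kuratowski-converge to `S∞ ⊆ ℝ`, that `S∞ ∩ [0,∞)` has a least element `a > 0`,
that each `S n ∩ [0,∞)` has a least element `aseq n`, and that there is `δ > 0` such that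
every element of `S n` other than `aseq n` is either negative or at least `aseq n + δ`.
Then `aseq n → a`. -/
theorem least_nonneg_element_converges
    (S : ℕ → Set ℝ) (Sinf : Set ℝ) (hS : ∀ n, (S n).Nonempty)
    (hKura₁ : ∀ l ∈ Sinf, ∃ x : ℕ → ℝ,
      (∀ n, x n ∈ S n) ∧ Tendsto x atTop (nhds l))
    (hKura₂ : ∀ φ : ℕ → ℕ, StrictMono φ → ∀ μ : ℕ → ℝ, (∀ k, μ k ∈ S (φ k)) →
      ∀ l : ℝ, Tendsto μ atTop (nhds l) → l ∈ Sinf)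
    (a : ℝ) (ha : IsLeast (Sinf ∩ Set.Ici (0 : ℝ)) a) (ha0 : 0 < a)
    (aseq : ℕ → ℝ) (haseq : ∀ n, IsLeast (S n ∩ Set.Ici (0 : ℝ)) (aseq n))
    (δ : ℝ) (hδ : 0 < δ)
    (hgap : ∀ n, ∀ s ∈ S n, s ≠ aseq n → s < 0 ∨ aseq n + δ ≤ s) :
    Tendsto aseq atTop (nhds a) := by
  obtain ⟨⟨haS, -⟩, hleast⟩ := ha
  obtain ⟨x, hxS, hx⟩ := hKura₁ a haS
  refine tendsto_order.2 ⟨fun b hb => ?_, fun b hb => ?_⟩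
  · by_contra hcon
    -- Infinitely many `aseq n` lie in the compact interval `[0, b]`; a limit point of these
    -- belongs to `Sinf ∩ [0, ∞)` and is smaller than `a`.
    have hfreq : ∃ᶠ n in atTop, aseq n ≤ b := by
      simpa only [not_eventually, not_lt] using hcon
    obtain ⟨φ, hφ, hφb⟩ := extraction_of_frequently_atTop hfreq
    obtain ⟨l, hl, ψ, hψ, hlim⟩ := (isCompact_Icc (a := (0 : ℝ)) (b := b)).tendsto_subseq
      (x := aseq ∘ φ) fun k => ⟨(haseq (φ k)).1.2, hφb k⟩
    have hlS : l ∈ Sinf :=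
      hKura₂ (φ ∘ ψ) (hφ.comp hψ) _ (fun k => (haseq (φ (ψ k))).1.1) l hlim
    exact absurd (hleast ⟨hlS, hl.1⟩) (not_le.2 (hl.2.trans_lt hb))
  · -- Since `a > 0`, the approximants `x n` of `a` are eventually nonnegative.
    filter_upwards [hx.eventually_lt_const hb, hx.eventually_const_lt ha0] with n hn hn0
    exact ((haseq n).2 ⟨hxS n, hn0.le⟩).trans_lt hn
end
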